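/- Define D : ℝ² → ℝ by D(x,t) = 128 cos(√3 t) − 108 sinh(x) + 63 sinh(3x) − 180 cosh(x) + 65 cosh(3x), and define q : ℝ² → ℂ by q(x,t) = 4 (4 e^{2x} − 1) e^{−2x − i t/√3} ( 1 + 4 e^{2x} − 4 e^{x + i√3 t} ) / D(x,t). Then q is smooth and satisfies i q_t − (1/√3) q_xx + 2√3 \overline{q} \overline{q}_x = 0 on the open set { (x,t) ∈ ℝ² : D(x,t) ≠ 0 }. -/

import Mathlib

/-- Partial derivative in the first (spatial) variable. -/
noncomputable def pdx {E : Type*} [NormedAddCommGroup E] [NormedSpace ℝ E]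
    (f : ℝ × ℝ → E) : ℝ × ℝ → E := fun p => fderiv ℝ f p (1, 0)

/-- Partial derivative in the second (time) variable. -/
noncomputable def pdt {E : Type*} [NormedAddCommGroup E] [NormedSpace ℝ E]
    (f : ℝ × ℝ → E) : ℝ × ℝ → E := fun p => fderiv ℝ f p (0, 1)

/-!
The equation is the conservation law `i√3 q_t = (q_x - 3 q̄²)_x`. Write `q = f / τ` with `τ` real,
where `f` and `τ` are exponential polynomials. The double pole of `q_x - 3 q̄²` along `τ = 0`
cancels, so this flux is `k / τ` with `k` again an exponential polynomial, and the equation splits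
into the two bilinear identities `D_x f·τ = 3 f̄² + k τ` and `i√3 D_t f·τ = D_x k·τ`. Translating
`x` by `log 2` centres the breather: `f`, `k` and `τ` become short Laurent polynomials in `2 e^x`
and `e^{it/√3}`.
-/

namespace BreatherSoliton

open Complex Topology ComplexConjugate

section Hirota

variable {𝕜 𝕜' E : Type*} [NontriviallyNormedField 𝕜] [NormedField 𝕜'] [NormedAlgebra 𝕜 𝕜']
  [NormedAddCommGroup E] [NormedSpace 𝕜 E] {f g : E → 𝕜'} {f' g' : E →L[𝕜] 𝕜'} {p : E}

variable (𝕜) in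
/-- Hirota's bilinear derivative `D_v f·g = (∂_v f) g - f (∂_v g)` in the direction `v`: the
numerator of `∂_v (f / g)`. -/
noncomputable def hirota (v : E) (f g : E → 𝕜') (p : E) : 𝕜' :=
  fderiv 𝕜 f p v * g p - f p * fderiv 𝕜 g p v

theorem hasFDerivAt_div (hf : HasFDerivAt f f' p) (hg : HasFDerivAt g g' p) (hp : g p ≠ 0) :
    HasFDerivAt (f / g) ((g p ^ 2)⁻¹ • (g p • f' - f p • g')) p := by
  rw [div_eq_mul_inv]
  refine (hf.mul ((hasFDerivAt_inv' hp).comp p hg)).congr_fderiv ?_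
  ext v
  simp only [add_apply, sub_apply, smul_apply, neg_apply, smul_eq_mul, Function.comp_apply,
    ContinuousLinearMap.comp_apply, ContinuousLinearMap.mulLeftRight_apply]
  field_simp
  ring

theorem differentiableAt_div (hf : DifferentiableAt 𝕜 f p) (hg : DifferentiableAt 𝕜 g p)
    (hp : g p ≠ 0) : DifferentiableAt 𝕜 (f / g) p :=
  (hasFDerivAt_div hf.hasFDerivAt hg.hasFDerivAt hp).differentiableAt

theorem fderiv_div_apply (hf : DifferentiableAt 𝕜 f p) (hg : DifferentiableAt 𝕜 g p)
    (hp : g p ≠ 0) (v : E) : fderiv 𝕜 (f / g) p v = hirota 𝕜 v f g p / g p ^ 2 := by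
  rw [(hasFDerivAt_div hf.hasFDerivAt hg.hasFDerivAt hp).fderiv, hirota, div_eq_inv_mul]
  simp [mul_comm]

end Hirota

theorem ofReal_sqrt_three_ne_zero : (√3 : ℂ) ≠ 0 := by simp

theorem ofReal_sqrt_three_sq : (√3 : ℂ) ^ 2 = 3 := by
  exact_mod_cast congrArg ofReal (Real.sq_sqrt zero_le_three)

section Reduction

variable {p : ℝ × ℝ}

theorem evolution_of_flux {q w : ℝ × ℝ → ℂ} (hq : DifferentiableAt ℝ q p)
    (hw : DifferentiableAt ℝ w p) (hx : pdx q =ᶠ[𝓝 p] fun r => 3 * conj (q r) ^ 2 + w r)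
    (ht : I * √3 * pdt q p = pdx w p) :
    I * pdt q p - (1 / (√3 : ℂ)) * pdx (pdx q) p + 2 * (√3 : ℂ) * conj (q p) * conj (pdx q p)
      = 0 := by
  have hxx : pdx (pdx q) p = 6 * conj (q p) * conj (pdx q p) + pdx w p := by
    have hqc : HasFDerivAt (fun r => conj (q r))
        (conjCLE.toContinuousLinearMap ∘L fderiv ℝ q p) p :=
      conjCLE.toContinuousLinearMap.hasFDerivAt.comp p hq.hasFDerivAt
    have hflux := hx.fderiv_eq.trans (((hqc.pow 2).const_mul 3).add hw.hasFDerivAt).fderiv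
    simp only [pdx, hflux, add_apply, smul_apply, smul_eq_mul, nsmul_eq_mul,
      ContinuousLinearMap.comp_apply, ContinuousLinearEquiv.coe_coe, conjCLE_apply]
    push_cast
    ring
  rw [hxx, ← ht]
  field_simp [ofReal_sqrt_three_ne_zero]
  linear_combination 2 * conj (q p) * conj (pdx q p) * ofReal_sqrt_three_sq

theorem evolution_of_bilinear {f k τ : ℝ × ℝ → ℂ} (hf : Differentiable ℝ f)
    (hk : Differentiable ℝ k) (hτ : Differentiable ℝ τ) (hτ_real : ∀ r, conj (τ r) = τ r)
    (hx : ∀ r, hirota ℝ (1, 0) f τ r = 3 * conj (f r) ^ 2 + k r * τ r)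
    (ht : I * √3 * hirota ℝ (0, 1) f τ p = hirota ℝ (1, 0) k τ p) (hp : τ p ≠ 0) :
    I * pdt (f / τ) p - (1 / (√3 : ℂ)) * pdx (pdx (f / τ)) p
      + 2 * (√3 : ℂ) * conj ((f / τ) p) * conj (pdx (f / τ) p) = 0 := by
  refine evolution_of_flux (w := k / τ) (differentiableAt_div (hf p) (hτ p) hp)
    (differentiableAt_div (hk p) (hτ p) hp) ?_ ?_
  · filter_upwards [hτ.continuous.continuousAt.eventually_ne hp] with r hr
    rw [pdx, fderiv_div_apply (hf r) (hτ r) hr, hx]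
    simp only [Pi.div_apply, map_div₀, hτ_real]
    field_simp
  · rw [pdt, pdx, fderiv_div_apply (hf p) (hτ p) hp, fderiv_div_apply (hk p) (hτ p) hp, ← ht,
      mul_div_assoc]

end Reduction

/-- The monomial `(2 e^x)^m (e^{it/√3})^n`, from which the breather is built, written as a single
exponential up to the factor `2 ^ m`, which translates `x` by `log 2`. -/
noncomputable def planeWave (m n : ℤ) (p : ℝ × ℝ) : ℂ :=
  2 ^ m * exp (m * p.1 + n * (I / √3 * p.2))

section PlaneWave

variable (m n : ℤ) (p : ℝ × ℝ)

theorem planeWave_eq_zpow_mul_zpow :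
    planeWave m n p = (2 * exp p.1) ^ m * exp (I / √3 * p.2) ^ n := by
  rw [planeWave, exp_add, exp_int_mul, exp_int_mul, mul_zpow, mul_assoc]

theorem exists_planeWave_eq_zpow_mul_zpow :
    ∃ X A : ℂ, X ≠ 0 ∧ A ≠ 0 ∧ ∀ m n, planeWave m n p = X ^ m * A ^ n :=
  ⟨_, _, mul_ne_zero two_ne_zero (exp_ne_zero _), exp_ne_zero _,
    fun m n => planeWave_eq_zpow_mul_zpow m n p⟩

theorem conj_planeWave : conj (planeWave m n p) = planeWave m (-n) p := by
  simp [planeWave, ← exp_conj, neg_div, map_ofNat]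

@[fun_prop]
theorem contDiff_planeWave {r : WithTop ℕ∞} : ContDiff ℝ r (planeWave m n) := by
  have hfst : ContDiff ℝ r fun p : ℝ × ℝ => (p.1 : ℂ) := ofRealCLM.contDiff.comp contDiff_fst
  have hsnd : ContDiff ℝ r fun p : ℝ × ℝ => (p.2 : ℂ) := ofRealCLM.contDiff.comp contDiff_snd
  unfold planeWave
  fun_prop

@[fun_prop]
theorem differentiable_planeWave : Differentiable ℝ (planeWave m n) :=
  (contDiff_planeWave m n).differentiable one_ne_zero

theorem fderiv_planeWave_apply (v : ℝ × ℝ) :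
    fderiv ℝ (planeWave m n) p v = (m * v.1 + n * (I / √3 * v.2)) * planeWave m n p := by
  have hfst : HasFDerivAt (fun p : ℝ × ℝ => (p.1 : ℂ)) (ofRealCLM ∘L .fst ℝ ℝ ℝ) p :=
    (ofRealCLM ∘L .fst ℝ ℝ ℝ).hasFDerivAt
  have hsnd : HasFDerivAt (fun p : ℝ × ℝ => (p.2 : ℂ)) (ofRealCLM ∘L .snd ℝ ℝ ℝ) p :=
    (ofRealCLM ∘L .snd ℝ ℝ ℝ).hasFDerivAt
  have hwave : HasFDerivAt (planeWave m n) _ p := ((hfst.const_mul (m : ℂ)).add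
    ((hsnd.const_mul (I / √3)).const_mul (n : ℂ))).cexp.const_mul (2 ^ m)
  rw [hwave.fderiv, planeWave]
  simp only [Pi.add_apply, add_apply, smul_apply, smul_eq_mul, ContinuousLinearMap.comp_apply,
    ContinuousLinearMap.coe_fst', ContinuousLinearMap.coe_snd', ofRealCLM_apply]
  ring

end PlaneWave

/-- The numerator `f` of the breather `q = f / τ`; with `y = x + log 2` and `θ = t/√3` it is
`8 sinh y (e^{-iθ} cosh y - e^{2iθ})`. -/
noncomputable def numerator (p : ℝ × ℝ) : ℂ :=
  2 * (planeWave 2 (-1) p - planeWave (-2) (-1) p) - 4 * (planeWave 1 2 p - planeWave (-1) 2 p)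

/-- The tau function of the breather, `2 cosh 3y - 18 cosh y + 16 cos 3θ` with `y = x + log 2` and
`θ = t/√3`. -/
noncomputable def tau (p : ℝ × ℝ) : ℂ :=
  planeWave 3 0 p + planeWave (-3) 0 p - 9 * (planeWave 1 0 p + planeWave (-1) 0 p)
    + 8 * (planeWave 0 3 p + planeWave 0 (-3) p)

/-- The numerator `k` of the flux `q_x - 3 q̄² = k / τ` of the breather, found as the polynomial
quotient of `D_x f·τ - 3 f̄²` by `τ`. -/
noncomputable def fluxNumerator (p : ℝ × ℝ) : ℂ :=
  12 * planeWave 0 (-1) p - 2 * (planeWave 2 (-1) p + planeWave (-2) (-1) p)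
    - 4 * (planeWave 1 2 p + planeWave (-1) 2 p)

theorem contDiff_numerator {r : WithTop ℕ∞} : ContDiff ℝ r numerator := by
  unfold numerator; fun_prop

theorem contDiff_tau {r : WithTop ℕ∞} : ContDiff ℝ r tau := by
  unfold tau; fun_prop

theorem differentiable_fluxNumerator : Differentiable ℝ fluxNumerator := by
  unfold fluxNumerator; fun_prop

section Bilinear

variable (p : ℝ × ℝ)

theorem conj_numerator :
    conj (numerator p) = 2 * (planeWave 2 1 p - planeWave (-2) 1 p)
      - 4 * (planeWave 1 (-2) p - planeWave (-1) (-2) p) := by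
  simp only [numerator, map_sub, map_mul, map_ofNat, conj_planeWave, neg_neg]

theorem conj_tau : conj (tau p) = tau p := by
  simp only [tau, map_add, map_sub, map_mul, map_ofNat, conj_planeWave, neg_zero, neg_neg]
  ring

theorem pdx_numerator :
    pdx numerator p = 4 * (planeWave 2 (-1) p + planeWave (-2) (-1) p)
      - 4 * (planeWave 1 2 p + planeWave (-1) 2 p) := by
  unfold pdx numerator
  simp (disch := fun_prop) only [fderiv_fun_sub, fderiv_const_mul, sub_apply, smul_apply,
    smul_eq_mul, fderiv_planeWave_apply]
  push_cast
  ring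

theorem pdt_numerator :
    pdt numerator p = -(I / √3) * (2 * (planeWave 2 (-1) p - planeWave (-2) (-1) p)
      + 8 * (planeWave 1 2 p - planeWave (-1) 2 p)) := by
  unfold pdt numerator
  simp (disch := fun_prop) only [fderiv_fun_sub, fderiv_const_mul, sub_apply, smul_apply,
    smul_eq_mul, fderiv_planeWave_apply]
  push_cast
  ring

theorem pdx_tau :
    pdx tau p = 3 * (planeWave 3 0 p - planeWave (-3) 0 p)
      - 9 * (planeWave 1 0 p - planeWave (-1) 0 p) := by
  unfold pdx tau
  simp (disch := fun_prop) only [fderiv_fun_add, fderiv_fun_sub, fderiv_const_mul, add_apply,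
    sub_apply, smul_apply, smul_eq_mul, fderiv_planeWave_apply]
  push_cast
  ring

theorem pdt_tau :
    pdt tau p = I / √3 * (24 * (planeWave 0 3 p - planeWave 0 (-3) p)) := by
  unfold pdt tau
  simp (disch := fun_prop) only [fderiv_fun_add, fderiv_fun_sub, fderiv_const_mul, add_apply,
    sub_apply, smul_apply, smul_eq_mul, fderiv_planeWave_apply]
  push_cast
  ring

theorem pdx_fluxNumerator :
    pdx fluxNumerator p = -4 * (planeWave 2 (-1) p - planeWave (-2) (-1) p)
      - 4 * (planeWave 1 2 p - planeWave (-1) 2 p) := by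
  unfold pdx fluxNumerator
  simp (disch := fun_prop) only [fderiv_fun_add, fderiv_fun_sub, fderiv_const_mul, add_apply,
    sub_apply, smul_apply, smul_eq_mul, fderiv_planeWave_apply]
  push_cast
  ring

theorem hirota_fst_numerator_tau :
    hirota ℝ (1, 0) numerator tau p
      = 3 * conj (numerator p) ^ 2 + fluxNumerator p * tau p := by
  obtain ⟨X, A, hX, hA, hwave⟩ := exists_planeWave_eq_zpow_mul_zpow p
  change pdx numerator p * tau p - numerator p * pdx tau p = _
  rw [pdx_numerator, pdx_tau, conj_numerator]
  simp only [numerator, tau, fluxNumerator, hwave]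
  field_simp
  ring

theorem hirota_snd_numerator_tau :
    I * √3 * hirota ℝ (0, 1) numerator tau p = hirota ℝ (1, 0) fluxNumerator tau p := by
  obtain ⟨X, A, hX, hA, hwave⟩ := exists_planeWave_eq_zpow_mul_zpow p
  change I * √3 * (pdt numerator p * tau p - numerator p * pdt tau p)
    = pdx fluxNumerator p * tau p - fluxNumerator p * pdx tau p
  rw [pdt_numerator, pdt_tau, pdx_fluxNumerator, pdx_tau]
  simp only [numerator, tau, fluxNumerator, hwave]
  field_simp [ofReal_sqrt_three_ne_zero]
  simp only [I_sq]
  ring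

end Bilinear

section ClosedForm

variable (x t : ℝ)

theorem exp_phase_pow_three : exp (I / √3 * t) ^ 3 = exp (√3 * t * I) := by
  have h : (3 : ℂ) / √3 = √3 := by
    rw [div_eq_iff ofReal_sqrt_three_ne_zero, ← sq, ofReal_sqrt_three_sq]
  rw [← exp_nat_mul]
  congr 1
  push_cast
  linear_combination I * t * h

theorem eight_mul_tau :
    8 * tau (x, t) = ((128 * Real.cos (√3 * t) - 108 * Real.sinh x + 63 * Real.sinh (3 * x)
      - 180 * Real.cosh x + 65 * Real.cosh (3 * x) : ℝ) : ℂ) := by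
  have hx : exp (3 * x) = exp x ^ 3 := by rw [← exp_nat_mul]; norm_num
  push_cast
  simp only [tau, planeWave_eq_zpow_mul_zpow, cos, sinh, cosh, neg_mul, exp_neg, hx,
    ← exp_phase_pow_three]
  field_simp
  ring

theorem eight_mul_numerator :
    8 * numerator (x, t) = 4 * ((4 * Real.exp (2 * x) - 1 : ℝ) : ℂ)
        * exp (-2 * (x : ℂ) - I * (t : ℂ) / (√3 : ℂ))
        * (1 + 4 * ((Real.exp (2 * x) : ℝ) : ℂ) - 4 * exp ((x : ℂ) + I * (√3 : ℂ) * (t : ℂ))) := by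
  have hx : exp (2 * x) = exp x ^ 2 := by rw [← exp_nat_mul]; norm_num
  have hphase : exp (I * √3 * t) = exp (I / √3 * t) ^ 3 := by
    rw [exp_phase_pow_three]; ring_nf
  push_cast
  simp only [numerator, planeWave_eq_zpow_mul_zpow, neg_mul, exp_sub, exp_add, exp_neg, hx,
    hphase, mul_div_right_comm]
  field_simp
  ring

end ClosedForm

end BreatherSoliton

open BreatherSoliton

/-- The (singular) breather
`q(x,t) = 4(4e^{2x}-1)e^{-2x-it/√3}(1+4e^{2x}-4e^{x+i√3 t})/D(x,t)`,
with `D(x,t) = 128cos(√3 t) - 108 sinh x + 63 sinh 3x - 180 cosh x + 65 cosh 3x`,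
is smooth and solves `i q_t - (1/√3) q_xx + 2√3 q̄ q̄_x = 0` on `{D ≠ 0}`. -/
theorem breather_soliton
    (D : ℝ × ℝ → ℝ)
    (hD : D = fun p => 128 * Real.cos (Real.sqrt 3 * p.2) - 108 * Real.sinh p.1
      + 63 * Real.sinh (3 * p.1) - 180 * Real.cosh p.1 + 65 * Real.cosh (3 * p.1))
    (q : ℝ × ℝ → ℂ)
    (hq : q = fun p =>
      4 * ((4 * Real.exp (2 * p.1) - 1 : ℝ) : ℂ)
        * Complex.exp (-2 * (p.1 : ℂ) - Complex.I * (p.2 : ℂ) / (Real.sqrt 3 : ℂ))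
        * (1 + 4 * ((Real.exp (2 * p.1) : ℝ) : ℂ)
            - 4 * Complex.exp ((p.1 : ℂ) + Complex.I * (Real.sqrt 3 : ℂ) * (p.2 : ℂ)))
        / ((D p : ℝ) : ℂ)) :
    ContDiffOn ℝ (⊤ : ℕ∞) q {p : ℝ × ℝ | D p ≠ 0} ∧
    ∀ p ∈ {p : ℝ × ℝ | D p ≠ 0},
      Complex.I * pdt q p - (1 / (Real.sqrt 3 : ℂ)) * pdx (pdx q) p
        + 2 * (Real.sqrt 3 : ℂ) * (starRingEnd ℂ) (q p) * (starRingEnd ℂ) (pdx q p) = 0 := by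
  have hD' : ∀ p, (D p : ℂ) = 8 * tau p := fun p => by
    rw [hD, eight_mul_tau]
  have hq' : q = numerator / tau := by
    funext p
    rw [Pi.div_apply, ← mul_div_mul_left _ _ (by norm_num : (8 : ℂ) ≠ 0), eight_mul_numerator,
      ← hD', hq]
  have hτ : ∀ p, D p ≠ 0 → tau p ≠ 0 := fun p hp =>
    right_ne_zero_of_mul (hD' p ▸ Complex.ofReal_ne_zero.2 hp)
  subst hq'
  refine ⟨?_, fun p hp => evolution_of_bilinear (contDiff_numerator.differentiable one_ne_zero)
    differentiable_fluxNumerator (contDiff_tau.differentiable one_ne_zero) conj_tau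
    hirota_fst_numerator_tau (hirota_snd_numerator_tau p) (hτ p hp)⟩
  rw [div_eq_mul_inv]
  exact contDiff_numerator.contDiffOn.mul (contDiff_tau.contDiffOn.inv hτ)
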